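/- arXiv:2012.14525 — 3 statements merged into one kernel-verified Lean document; each statement's English description precedes it below -/
import Mathlib

section
/- Suppose the Assumptions hold, d₁ = d₂, and (r,s) is a red arrow with ⟨r,s⟩ = ⟨a,d₁⟩. Then either (c) r ∈ {x(a)}×(y(a),∞) and s ∈ (x(a),x(d₁)]×{y(a)}, or (d) r ∈ (−∞,x(a))×{y(a)} and s ∈ {x(a)}×[y(d₁),y(a)). Moreover, the open axis-parallel segment with endpoints a and r contains no point of X, and the open axis-parallel segment with endpoints a and s contains no point of X. -/
noncomputable section
open Classical

/-- The L1 (Manhattan) metric on ℝ². -/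
def rho (u v : ℝ × ℝ) : ℝ := |u.1 - v.1| + |u.2 - v.2|

/-- `z` is between `u` and `v` (w.r.t. the L1 metric): the three points are
pairwise distinct and `ρ(u,v) = ρ(u,z) + ρ(z,v)`. -/
def MBtw (u z v : ℝ × ℝ) : Prop :=
  u ≠ z ∧ z ≠ v ∧ u ≠ v ∧ rho u v = rho u z + rho z v

/-- The line of `X` induced by distinct points `u, v`. -/
def lineThrough (X : Finset (ℝ × ℝ)) (u v : ℝ × ℝ) : Finset (ℝ × ℝ) :=
  X.filter fun z => z = u ∨ z = v ∨ MBtw u z v ∨ MBtw z u v ∨ MBtw u v z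

/-- `X` is non-collinear: no line induced by two distinct points of `X` equals `X`. -/
def NonCollinear (X : Finset (ℝ × ℝ)) : Prop :=
  ∀ u ∈ X, ∀ v ∈ X, u ≠ v → lineThrough X u v ≠ X

/-- `{p,q}` is an increasing pair. -/
def IncPair (p q : ℝ × ℝ) : Prop := 0 < (q.1 - p.1) * (q.2 - p.2)

/-- `{p,q}` is a decreasing pair. -/
def DecPair (p q : ℝ × ℝ) : Prop := (q.1 - p.1) * (q.2 - p.2) < 0

/-- The partial order `≤_I`. -/
def leI (c d : ℝ × ℝ) : Prop := c.1 ≤ d.1 ∧ c.2 ≤ d.2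

/-- `c <_I d`. -/
def ltI (c d : ℝ × ℝ) : Prop := leI c d ∧ c ≠ d

/-- The partial order `≤_D`. -/
def leD (c d : ℝ × ℝ) : Prop := c.1 ≤ d.1 ∧ d.2 ≤ c.2

/-- `c <_D d`. -/
def ltD (c d : ℝ × ℝ) : Prop := leD c d ∧ c ≠ d

/-- `(p,q)` is a blue arrow of `X`. -/
def BlueArrow (X : Finset (ℝ × ℝ)) (p q : ℝ × ℝ) : Prop :=
  p ∈ X ∧ q ∈ X ∧ IncPair p q ∧ ltI p q ∧
  ∀ a b, a ∈ X → b ∈ X → IncPair a b → ltI a b →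
    lineThrough X a b = lineThrough X p q → (ltI q b ∨ (q = b ∧ leI a p))

/-- `(p,q)` is a red arrow of `X`. -/
def RedArrow (X : Finset (ℝ × ℝ)) (p q : ℝ × ℝ) : Prop :=
  p ∈ X ∧ q ∈ X ∧ DecPair p q ∧ ltD p q ∧
  ∀ a b, a ∈ X → b ∈ X → DecPair a b → ltD a b →
    lineThrough X a b = lineThrough X p q → (ltD q b ∨ (q = b ∧ leD a p))

/-- An arrow is a blue or a red arrow. -/
def Arrow (X : Finset (ℝ × ℝ)) (p q : ℝ × ℝ) : Prop :=
  BlueArrow X p q ∨ RedArrow X p q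

/-- `a` is not an endpoint of any arrow of `X`. -/
def NotEndpoint (X : Finset (ℝ × ℝ)) (a : ℝ × ℝ) : Prop :=
  ∀ p q, Arrow X p q → a ≠ p ∧ a ≠ q

/-- Option (a): `t ∈ (x(a),x(d))×{y(a)}` and `w = d`. -/
def PlacementA (a d t w : ℝ × ℝ) : Prop :=
  (a.1 < t.1 ∧ t.1 < d.1 ∧ t.2 = a.2) ∧ w = d

/-- Option (b): `t ∈ {x(a)}×(y(d),y(a))` and `w = d`. -/
def PlacementB (a d t w : ℝ × ℝ) : Prop :=
  (t.1 = a.1 ∧ d.2 < t.2 ∧ t.2 < a.2) ∧ w = d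

/-- Option (c): `t ∈ {x(a)}×(y(a),∞)` and `w ∈ (x(a),x(d)]×{y(a)}`. -/
def PlacementC (a d t w : ℝ × ℝ) : Prop :=
  (t.1 = a.1 ∧ a.2 < t.2) ∧ (a.1 < w.1 ∧ w.1 ≤ d.1 ∧ w.2 = a.2)

/-- Option (d): `t ∈ (−∞,x(a))×{y(a)}` and `w ∈ {x(a)}×[y(d),y(a))`. -/
def PlacementD (a d t w : ℝ × ℝ) : Prop :=
  (t.2 = a.2 ∧ t.1 < a.1) ∧ (w.1 = a.1 ∧ d.2 ≤ w.2 ∧ w.2 < a.2)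

/-- The four placement options of Lemma 2 (placement). -/
def Placement (a d t w : ℝ × ℝ) : Fin 4 → Prop
  | 0 => PlacementA a d t w
  | 1 => PlacementB a d t w
  | 2 => PlacementC a d t w
  | 3 => PlacementD a d t w

/-- The open axis-parallel segment with endpoints `u` and `v` (for `u, v`
sharing a coordinate): the points strictly between them on the common
horizontal or vertical line. -/
def OpenSeg (u v : ℝ × ℝ) : Set (ℝ × ℝ) :=
  {z | (z.1 = u.1 ∧ u.1 = v.1 ∧ min u.2 v.2 < z.2 ∧ z.2 < max u.2 v.2) ∨
       (z.2 = u.2 ∧ u.2 = v.2 ∧ min u.1 v.1 < z.1 ∧ z.1 < max u.1 v.1)}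

/-!
A decreasing pair `u <_D v` induces the set of points of `X` that are `≤_D`-comparable to both `u`
and `v`. By minimality of the arrow, `s ≤_D d₁`, and since both strips at `d₁` are empty, `s` lies
on one of the two axis-parallel rays through `a`, or `s = d₁`. If `s = d₁`, then `r` also lies on
one of these rays and `⟨a, r⟩ = X`, against non-collinearity. If `s` lies on the horizontal ray,
then the second quadrant of `a` being empty forces `r` to lie vertically above `a`, which is
option (c). A point of `X` inside one of the two segments could then replace `r` or `s` without
changing the line, against minimality. Reflection in the antidiagonal exchanges the two rays and
turns option (c) into option (d).
-/

section Lines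

variable {X : Finset (ℝ × ℝ)} {u v z : ℝ × ℝ}

theorem mem_uIcc_iff_fst_snd {α β : Type*} [Lattice α] [Lattice β] {u v z : α × β} :
    z ∈ Set.uIcc u v ↔ z.1 ∈ Set.uIcc u.1 v.1 ∧ z.2 ∈ Set.uIcc u.2 v.2 := by
  rw [← Set.mem_prod, Set.uIcc_prod_uIcc]

theorem rho_eq_add_iff_mem_uIcc (u v z : ℝ × ℝ) :
    rho u v = rho u z + rho z v ↔ z ∈ Set.uIcc u v := by
  have coord (p q r : ℝ) : |p - q| = |p - r| + |r - q| ↔ r ∈ Set.uIcc p q := by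
    rw [← segment_eq_uIcc, mem_segment_iff_wbtw, ← dist_add_dist_eq_iff]
    simp only [Real.dist_eq, eq_comm]
  rw [mem_uIcc_iff_fst_snd, ← coord, ← coord]
  have fst_le := abs_sub_le u.1 z.1 v.1
  have snd_le := abs_sub_le u.2 z.2 v.2
  simp only [rho]
  constructor
  · intro h
    constructor <;> linarith
  · rintro ⟨h₁, h₂⟩
    linarith

theorem mem_lineThrough_iff_mem_uIcc (huv : u ≠ v) :
    z ∈ lineThrough X u v ↔
      z ∈ X ∧ (z ∈ Set.uIcc u v ∨ u ∈ Set.uIcc z v ∨ v ∈ Set.uIcc u z) := by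
  simp only [lineThrough, Finset.mem_filter, MBtw, rho_eq_add_iff_mem_uIcc]
  refine and_congr_right fun _ => ?_
  by_cases hzu : z = u
  · simp [hzu]
  by_cases hzv : z = v
  · simp [hzv]
  simp [hzu, hzv, huv, Ne.symm hzu, Ne.symm hzv]

theorem mem_lineThrough_iff_leD (h₁ : u.1 < v.1) (h₂ : v.2 < u.2) :
    z ∈ lineThrough X u v ↔ z ∈ X ∧ (leD z u ∨ (leD u z ∧ leD z v) ∨ leD v z) := by
  rw [mem_lineThrough_iff_mem_uIcc (ne_of_apply_ne Prod.fst h₁.ne)]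
  simp only [mem_uIcc_iff_fst_snd, Set.mem_uIcc, leD]
  grind

theorem lineThrough_eq_self_of_snd_eq (h₁ : u.1 < v.1) (h₂ : u.2 = v.2)
    (hX : ∀ z ∈ X, u.1 < z.1 → z.1 < v.1 → z.2 = u.2) : lineThrough X u v = X := by
  ext z
  rw [mem_lineThrough_iff_mem_uIcc (ne_of_apply_ne Prod.fst h₁.ne)]
  simp only [mem_uIcc_iff_fst_snd, Set.mem_uIcc]
  grind

theorem lineThrough_eq_of_slide_tail {u' : ℝ × ℝ} (h₁ : u.1 < v.1) (h₂ : v.2 < u'.2)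
    (hu₁ : u'.1 = u.1) (hu₂ : u'.2 < u.2)
    (hleft : ∀ z ∈ X, ¬(z.1 < u.1 ∧ u'.2 ≤ z.2 ∧ z.2 < u.2))
    (hright : ∀ z ∈ X, ¬(u.1 < z.1 ∧ z.1 ≤ v.1 ∧ u'.2 < z.2 ∧ z.2 ≤ u.2)) :
    lineThrough X u' v = lineThrough X u v := by
  ext z
  rw [mem_lineThrough_iff_leD (hu₁ ▸ h₁) h₂, mem_lineThrough_iff_leD h₁ (h₂.trans hu₂)]
  simp only [leD]
  grind

theorem lineThrough_eq_of_slide_head {v' : ℝ × ℝ} (h₁ : u.1 < v'.1) (h₂ : v.2 < u.2)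
    (hv₁ : v'.1 < v.1) (hv₂ : v'.2 = v.2)
    (hbelow : ∀ z ∈ X, ¬(v'.1 ≤ z.1 ∧ z.1 < v.1 ∧ z.2 < v.2))
    (habove : ∀ z ∈ X, ¬(v'.1 < z.1 ∧ z.1 ≤ v.1 ∧ v.2 < z.2 ∧ z.2 ≤ u.2)) :
    lineThrough X u v' = lineThrough X u v := by
  ext z
  rw [mem_lineThrough_iff_leD h₁ (hv₂ ▸ h₂), mem_lineThrough_iff_leD (h₁.trans hv₁) h₂]
  simp only [leD]
  grind

theorem lineThrough_map (e : ℝ × ℝ ↪ ℝ × ℝ) (he : ∀ u v, rho (e u) (e v) = rho u v) :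
    lineThrough (X.map e) (e u) (e v) = (lineThrough X u v).map e := by
  simp only [lineThrough, MBtw, Finset.filter_map, Function.comp_def, he, e.injective.eq_iff,
    ne_eq]
  -- The two filters differ only in their decidability instances.
  congr

end Lines

section Segments

variable {u v z : ℝ × ℝ}

theorem mem_openSeg_iff_of_fst_eq (h₁ : u.1 = v.1) (h₂ : u.2 < v.2) :
    z ∈ OpenSeg u v ↔ z.1 = u.1 ∧ u.2 < z.2 ∧ z.2 < v.2 := by
  simp [OpenSeg, h₁, h₂.le, h₂.ne]

theorem mem_openSeg_iff_of_snd_eq (h₁ : u.1 < v.1) (h₂ : u.2 = v.2) :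
    z ∈ OpenSeg u v ↔ z.2 = u.2 ∧ u.1 < z.1 ∧ z.1 < v.1 := by
  simp [OpenSeg, h₂, h₁.le, h₁.ne]

end Segments

section RedArrows

variable {X : Finset (ℝ × ℝ)} {p q u v : ℝ × ℝ}

theorem leD.refl (u : ℝ × ℝ) : leD u u := ⟨le_rfl, le_rfl⟩

theorem leD.antisymm (huv : leD u v) (hvu : leD v u) : u = v :=
  Prod.ext (huv.1.antisymm hvu.1) (hvu.2.antisymm huv.2)

theorem decPair_and_ltD_iff : DecPair p q ∧ ltD p q ↔ p.1 < q.1 ∧ q.2 < p.2 := by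
  simp only [DecPair, ltD, leD, mul_neg_iff, sub_pos, sub_neg, ne_eq, Prod.ext_iff]
  grind

namespace RedArrow

theorem fst_lt (h : RedArrow X p q) : p.1 < q.1 :=
  (decPair_and_ltD_iff.1 ⟨h.2.2.1, h.2.2.2.1⟩).1

theorem snd_lt (h : RedArrow X p q) : q.2 < p.2 :=
  (decPair_and_ltD_iff.1 ⟨h.2.2.1, h.2.2.2.1⟩).2

theorem head_leD (h : RedArrow X p q) (hu : u ∈ X) (hv : v ∈ X) (h₁ : u.1 < v.1)
    (h₂ : v.2 < u.2) (hline : lineThrough X u v = lineThrough X p q) : leD q v := by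
  obtain ⟨hdec, hlt⟩ := decPair_and_ltD_iff.2 ⟨h₁, h₂⟩
  rcases h.2.2.2.2 u v hu hv hdec hlt hline with hqv | ⟨rfl, -⟩
  · exact hqv.1
  · exact leD.refl q

theorem leD_tail (h : RedArrow X p q) (hu : u ∈ X) (h₁ : u.1 < q.1) (h₂ : q.2 < u.2)
    (hline : lineThrough X u q = lineThrough X p q) : leD u p := by
  obtain ⟨hdec, hlt⟩ := decPair_and_ltD_iff.2 ⟨h₁, h₂⟩
  rcases h.2.2.2.2 u q hu h.2.1 hdec hlt hline with hqq | ⟨-, hup⟩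
  · exact absurd rfl hqq.2
  · exact hup

end RedArrow

end RedArrows

section Reflection

/-- The reflection `(x, y) ↦ (-y, -x)` in the antidiagonal. It is an L1 isometry preserving `≤_D`
that interchanges the placement options (c) and (d). -/
def antidiagReflection : (ℝ × ℝ) ↪ (ℝ × ℝ) where
  toFun z := (-z.2, -z.1)
  inj' z w h := by
    simp only [Prod.mk.injEq, neg_inj] at h
    exact Prod.ext h.2 h.1

variable {X : Finset (ℝ × ℝ)} {a d p q u v z : ℝ × ℝ}

@[simp]
theorem antidiagReflection_apply (z : ℝ × ℝ) : antidiagReflection z = (-z.2, -z.1) := rfl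

theorem rho_antidiagReflection (u v : ℝ × ℝ) :
    rho (antidiagReflection u) (antidiagReflection v) = rho u v := by
  simp only [rho, antidiagReflection_apply, neg_sub_neg, abs_sub_comm, add_comm]

theorem lineThrough_antidiagReflection :
    lineThrough (X.map antidiagReflection) (antidiagReflection u) (antidiagReflection v) =
      (lineThrough X u v).map antidiagReflection :=
  lineThrough_map antidiagReflection rho_antidiagReflection

theorem leD_antidiagReflection :
    leD (antidiagReflection u) (antidiagReflection v) ↔ leD u v := by
  simp [leD, and_comm]

theorem ltD_antidiagReflection :
    ltD (antidiagReflection u) (antidiagReflection v) ↔ ltD u v := by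
  rw [ltD, leD_antidiagReflection, antidiagReflection.injective.ne_iff, ltD]

theorem decPair_antidiagReflection :
    DecPair (antidiagReflection u) (antidiagReflection v) ↔ DecPair u v := by
  simp only [DecPair, antidiagReflection_apply]
  ring_nf

theorem RedArrow.reflect (h : RedArrow X p q) :
    RedArrow (X.map antidiagReflection) (antidiagReflection p) (antidiagReflection q) := by
  refine ⟨Finset.mem_map_of_mem _ h.1, Finset.mem_map_of_mem _ h.2.1,
    decPair_antidiagReflection.2 h.2.2.1, ltD_antidiagReflection.2 h.2.2.2.1, ?_⟩
  intro a' b' ha' hb'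
  obtain ⟨a, ha, rfl⟩ := Finset.mem_map.1 ha'
  obtain ⟨b, hb, rfl⟩ := Finset.mem_map.1 hb'
  simp only [decPair_antidiagReflection, ltD_antidiagReflection, leD_antidiagReflection,
    lineThrough_antidiagReflection, Finset.map_inj, EmbeddingLike.apply_eq_iff_eq]
  exact h.2.2.2.2 a b ha hb

theorem placementC_antidiagReflection :
    PlacementC (antidiagReflection a) (antidiagReflection d) (antidiagReflection p)
      (antidiagReflection q) ↔ PlacementD a d p q := by
  simp only [PlacementC, PlacementD, antidiagReflection_apply, neg_inj, neg_lt_neg_iff,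
    neg_le_neg_iff]
  tauto

theorem mem_openSeg_antidiagReflection :
    antidiagReflection z ∈ OpenSeg (antidiagReflection u) (antidiagReflection v) ↔
      z ∈ OpenSeg u v := by
  simp only [OpenSeg, Set.mem_ofPred_eq, antidiagReflection_apply, min_neg_neg, max_neg_neg,
    neg_inj, neg_lt_neg_iff]
  tauto

end Reflection

section Corner

/-- The position of `a` and `d` in the Assumptions when `d₁ = d₂ = d`: the point `d` lies in the
fourth quadrant of `a`, and the second quadrant of `a` and both strips cut out of its fourth
quadrant by `d` are empty. -/
structure EmptyCorner (X : Finset (ℝ × ℝ)) (a d : ℝ × ℝ) : Prop where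
  fst_lt : a.1 < d.1
  snd_lt : d.2 < a.2
  quadrant_empty : ∀ z ∈ X, ¬(z.1 < a.1 ∧ a.2 < z.2)
  horizontal_strip_empty : ∀ z ∈ X, ¬(a.1 < z.1 ∧ d.2 < z.2 ∧ z.2 < a.2)
  vertical_strip_empty : ∀ z ∈ X, ¬(a.1 < z.1 ∧ z.1 < d.1 ∧ z.2 < a.2)

namespace EmptyCorner

variable {X : Finset (ℝ × ℝ)} {a d r s z : ℝ × ℝ}

theorem reflect (h : EmptyCorner X a d) :
    EmptyCorner (X.map antidiagReflection) (antidiagReflection a) (antidiagReflection d) where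
  fst_lt := neg_lt_neg h.snd_lt
  snd_lt := neg_lt_neg h.fst_lt
  quadrant_empty := by
    have := h.quadrant_empty
    simp only [Finset.forall_mem_map, antidiagReflection_apply, neg_lt_neg_iff]
    grind
  horizontal_strip_empty := by
    have := h.vertical_strip_empty
    simp only [Finset.forall_mem_map, antidiagReflection_apply, neg_lt_neg_iff]
    grind
  vertical_strip_empty := by
    have := h.horizontal_strip_empty
    simp only [Finset.forall_mem_map, antidiagReflection_apply, neg_lt_neg_iff]
    grind

theorem mem_lineThrough_iff (h : EmptyCorner X a d) :
    z ∈ lineThrough X a d ↔ z ∈ X ∧ (leD z a ∨ (leD a z ∧ leD z d) ∨ leD d z) :=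
  mem_lineThrough_iff_leD h.fst_lt h.snd_lt

theorem notMem_lineThrough (h : EmptyCorner X a d) (h₁ : a.1 < z.1) (h₂ : a.2 < z.2) :
    z ∉ lineThrough X a d := by
  rw [h.mem_lineThrough_iff]
  have := h.snd_lt
  simp only [leD]
  grind

theorem snd_eq_or_fst_eq_of_leD (h : EmptyCorner X a d) (hz : z ∈ X) (haz : leD a z)
    (hzd : leD z d) : z.2 = a.2 ∨ z.1 = a.1 ∨ z = d := by
  have := h.horizontal_strip_empty z hz
  have := h.vertical_strip_empty z hz
  simp only [leD, Prod.ext_iff] at *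
  grind

theorem lineThrough_tail_eq_self_of_snd_eq (h : EmptyCorner X a d)
    (hline : lineThrough X r d = lineThrough X a d) (har : a.1 < r.1) (hrd : r.1 < d.1)
    (hr : r.2 = a.2) : lineThrough X a r = X := by
  refine lineThrough_eq_self_of_snd_eq har hr.symm fun z hz haz hzr => ?_
  have snd_ge : a.2 ≤ z.2 := by
    by_contra! hlt
    exact h.vertical_strip_empty z hz ⟨haz, hzr.trans hrd, hlt⟩
  have snd_le : z.2 ≤ a.2 := by
    by_contra! hlt
    refine h.notMem_lineThrough haz hlt (hline ▸ ?_)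
    rw [mem_lineThrough_iff_leD hrd (hr ▸ h.snd_lt)]
    exact ⟨hz, Or.inl ⟨hzr.le, hr ▸ hlt.le⟩⟩
  exact snd_le.antisymm snd_ge

theorem lineThrough_tail_eq_self_of_fst_eq (h : EmptyCorner X a d)
    (hline : lineThrough X r d = lineThrough X a d) (har : r.2 < a.2) (hrd : d.2 < r.2)
    (hr : r.1 = a.1) : lineThrough X a r = X := by
  apply Finset.map_injective antidiagReflection
  rw [← lineThrough_antidiagReflection]
  refine h.reflect.lineThrough_tail_eq_self_of_snd_eq ?_ (neg_lt_neg har) (neg_lt_neg hrd)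
    (congrArg Neg.neg hr)
  rw [lineThrough_antidiagReflection, lineThrough_antidiagReflection, hline]

section Arrow

variable (h : EmptyCorner X a d) (ha : a ∈ X) (hd : d ∈ X) (hrs : RedArrow X r s)
  (hline : lineThrough X r s = lineThrough X a d)
include h hrs hline

theorem tail_region : leD r a ∨ (leD a r ∧ leD r d) ∨ leD d r := by
  refine (h.mem_lineThrough_iff.1 (hline ▸ ?_)).2
  exact (mem_lineThrough_iff_leD hrs.fst_lt hrs.snd_lt).2 ⟨hrs.1, .inl (leD.refl r)⟩

theorem head_region : leD s a ∨ (leD a s ∧ leD s d) ∨ leD d s := by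
  refine (h.mem_lineThrough_iff.1 (hline ▸ ?_)).2
  exact (mem_lineThrough_iff_leD hrs.fst_lt hrs.snd_lt).2 ⟨hrs.2.1, .inr (.inr (leD.refl s))⟩

theorem openSeg_tail_empty (hC : PlacementC a d r s) : ∀ z ∈ X, z ∉ OpenSeg a r := by
  obtain ⟨⟨hr₁, hr₂⟩, -, -, hs₂⟩ := hC
  intro z hz hseg
  obtain ⟨hz₁, haz, hzr⟩ := (mem_openSeg_iff_of_fst_eq hr₁.symm hr₂).1 hseg
  have hline_z : lineThrough X z s = lineThrough X r s := by
    refine lineThrough_eq_of_slide_tail hrs.fst_lt (hs₂ ▸ haz) (hz₁.trans hr₁.symm) hzr ?_ ?_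
    · rintro w hw ⟨hwr, hzw, -⟩
      exact h.quadrant_empty w hw ⟨hr₁ ▸ hwr, haz.trans_le hzw⟩
    · rintro w hw ⟨hrw, hws, hzw, hwr⟩
      refine h.notMem_lineThrough (hr₁ ▸ hrw) (haz.trans hzw) (hline ▸ ?_)
      rw [mem_lineThrough_iff_leD hrs.fst_lt hrs.snd_lt]
      exact ⟨hw, .inr (.inl ⟨⟨hrw.le, hwr⟩, hws, hs₂ ▸ (haz.trans hzw).le⟩)⟩
  have tail_min : leD z r :=
    hrs.leD_tail hz (hz₁.trans_lt (hr₁ ▸ hrs.fst_lt)) (hs₂ ▸ haz) hline_z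
  exact hzr.not_ge tail_min.2

theorem openSeg_head_empty (hC : PlacementC a d r s) : ∀ z ∈ X, z ∉ OpenSeg a s := by
  obtain ⟨⟨hr₁, hr₂⟩, hs₁, hsd, hs₂⟩ := hC
  intro z hz hseg
  obtain ⟨hz₂, haz, hzs⟩ := (mem_openSeg_iff_of_snd_eq hs₁ hs₂.symm).1 hseg
  have hline_z : lineThrough X r z = lineThrough X r s := by
    refine lineThrough_eq_of_slide_head (hr₁ ▸ haz) hrs.snd_lt hzs (hz₂.trans hs₂.symm) ?_ ?_
    · rintro w hw ⟨hzw, hws, hlt⟩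
      exact h.vertical_strip_empty w hw ⟨haz.trans_le hzw, hws.trans_le hsd, hs₂ ▸ hlt⟩
    · rintro w hw ⟨hzw, hws, hsw, hwr⟩
      refine h.notMem_lineThrough (haz.trans hzw) (hs₂ ▸ hsw) (hline ▸ ?_)
      rw [mem_lineThrough_iff_leD hrs.fst_lt hrs.snd_lt]
      exact ⟨hw, .inr (.inl ⟨⟨hr₁ ▸ (haz.trans hzw).le, hwr⟩, hws, hsw.le⟩)⟩
  have head_min : leD s z :=
    hrs.head_leD hrs.1 hz (hr₁ ▸ haz) (hz₂.trans_lt hr₂) hline_z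
  exact hzs.not_ge head_min.1

include ha

theorem head_ne (hX : NonCollinear X) (har : a ≠ r) : s ≠ d := by
  rintro rfl
  refine hX a ha r hrs.1 har ?_
  have tail_ge : leD a r := hrs.leD_tail ha h.fst_lt h.snd_lt hline.symm
  rcases h.tail_region hrs hline with hra | ⟨-, hrd⟩ | hdr
  · exact absurd (tail_ge.antisymm hra) har
  · rcases h.snd_eq_or_fst_eq_of_leD hrs.1 tail_ge hrd with hr | hr | rfl
    · have fst_ne : a.1 ≠ r.1 := fun e => har (Prod.ext e hr.symm)
      exact h.lineThrough_tail_eq_self_of_snd_eq hline (tail_ge.1.lt_of_ne fst_ne) hrs.fst_lt hr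
    · have snd_ne : r.2 ≠ a.2 := fun e => har (Prod.ext hr.symm e.symm)
      exact h.lineThrough_tail_eq_self_of_fst_eq hline (tail_ge.2.lt_of_ne snd_ne) hrs.snd_lt hr
    · exact absurd hrs.fst_lt (lt_irrefl _)
  · exact absurd hrs.fst_lt hdr.1.not_gt

include hd

theorem head_leD : leD s d :=
  hrs.head_leD ha hd h.fst_lt h.snd_lt hline.symm

theorem head_snd_eq_or_fst_eq : s.2 = a.2 ∨ s.1 = a.1 ∨ s = d := by
  have head_le := h.head_leD ha hd hrs hline
  rcases h.head_region hrs hline with hsa | ⟨has, -⟩ | hds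
  · exact absurd ⟨hrs.fst_lt.trans_le hsa.1, hsa.2.trans_lt hrs.snd_lt⟩
      (h.quadrant_empty r hrs.1)
  · exact h.snd_eq_or_fst_eq_of_leD hrs.2.1 has head_le
  · exact .inr (.inr (head_le.antisymm hds))

theorem placementC (hs : s.2 = a.2) : PlacementC a d r s := by
  have tail_above : a.2 < r.2 := hs ▸ hrs.snd_lt
  have fst_ge : a.1 ≤ r.1 := by
    by_contra! hlt
    exact h.quadrant_empty r hrs.1 ⟨hlt, tail_above⟩
  have fst_le : r.1 ≤ a.1 := by
    rcases h.tail_region hrs hline with hra | ⟨har, -⟩ | hdr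
    · exact hra.1
    · exact absurd har.2 tail_above.not_ge
    · exact absurd (hdr.2.trans h.snd_lt.le) tail_above.not_ge
  exact ⟨⟨fst_le.antisymm fst_ge, tail_above⟩, fst_ge.trans_lt hrs.fst_lt,
    (h.head_leD ha hd hrs hline).1, hs⟩

theorem placementC_and_openSeg_empty (hs : s.2 = a.2) :
    PlacementC a d r s ∧ (∀ z ∈ X, z ∉ OpenSeg a r) ∧ (∀ z ∈ X, z ∉ OpenSeg a s) :=
  have hC := h.placementC ha hd hrs hline hs
  ⟨hC, h.openSeg_tail_empty hrs hline hC, h.openSeg_head_empty hrs hline hC⟩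

theorem placementD_and_openSeg_empty (hs : s.1 = a.1) :
    PlacementD a d r s ∧ (∀ z ∈ X, z ∉ OpenSeg a r) ∧ (∀ z ∈ X, z ∉ OpenSeg a s) := by
  have reflected := h.reflect.placementC_and_openSeg_empty
    (Finset.mem_map_of_mem _ ha) (Finset.mem_map_of_mem _ hd) hrs.reflect
    (by rw [lineThrough_antidiagReflection, lineThrough_antidiagReflection, hline])
    (congrArg Neg.neg hs)
  simpa only [placementC_antidiagReflection, Finset.forall_mem_map,
    mem_openSeg_antidiagReflection] using reflected

end Arrow

end EmptyCorner

end Corner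

theorem arrow_placement_one_d_general (X : Finset (ℝ × ℝ)) (a d r s : ℝ × ℝ)
    (hX : NonCollinear X) (ha : a ∈ X) (hd : d ∈ X) (h : EmptyCorner X a d)
    (hrs : RedArrow X r s) (hline : lineThrough X r s = lineThrough X a d) (har : a ≠ r) :
    (PlacementC a d r s ∨ PlacementD a d r s) ∧
    (∀ z ∈ X, z ∉ OpenSeg a r) ∧ (∀ z ∈ X, z ∉ OpenSeg a s) := by
  rcases h.head_snd_eq_or_fst_eq ha hd hrs hline with hs | hs | hs
  · exact (h.placementC_and_openSeg_empty ha hd hrs hline hs).imp_left .inl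
  · exact (h.placementD_and_openSeg_empty ha hd hrs hline hs).imp_left .inr
  · exact absurd hs (h.head_ne ha hrs hline hX har)

/-- Under the Assumptions with `d₁ = d₂`, the red arrow `(r,s)` for the line
`⟨a,d₁⟩` is placed according to option (c) or (d), and the open axis-parallel
segments between `a` and `r` and between `a` and `s` contain no point of `X`. -/
theorem arrow_placement_one_d (X : Finset (ℝ × ℝ)) (a d₁ d₂ r s : ℝ × ℝ)
    (hnc : NonCollinear X) (haX : a ∈ X) (hiso : NotEndpoint X a)
    (hQ2 : ∀ z ∈ X, ¬(z.1 < a.1 ∧ a.2 < z.2))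
    (hQ4 : ∃ z ∈ X, a.1 < z.1 ∧ z.2 < a.2)
    (hd1X : d₁ ∈ X) (hd1 : a.1 < d₁.1 ∧ d₁.2 < a.2)
    (hd1strip : ∀ z ∈ X, ¬(a.1 < z.1 ∧ d₁.2 < z.2 ∧ z.2 < a.2))
    (hd1seg : ∀ z ∈ X, ¬(a.1 < z.1 ∧ z.1 < d₁.1 ∧ z.2 = d₁.2))
    (hd2X : d₂ ∈ X) (hd2 : a.1 < d₂.1 ∧ d₂.2 < a.2)
    (hd2strip : ∀ z ∈ X, ¬(a.1 < z.1 ∧ z.1 < d₂.1 ∧ z.2 < a.2))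
    (hd2seg : ∀ z ∈ X, ¬(z.1 = d₂.1 ∧ d₂.2 < z.2 ∧ z.2 < a.2))
    (hdd : d₁ = d₂)
    (hrs : RedArrow X r s) (hline : lineThrough X r s = lineThrough X a d₁) :
    (PlacementC a d₁ r s ∨ PlacementD a d₁ r s) ∧
    (∀ z ∈ X, z ∉ OpenSeg a r) ∧ (∀ z ∈ X, z ∉ OpenSeg a s) := by
  subst hdd
  exact arrow_placement_one_d_general X a d₁ r s hnc haX hd1X
    ⟨hd1.1, hd1.2, hQ2, hd1strip, hd2strip⟩ hrs hline (hiso r s (.inr hrs)).1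
end
end

section
/- Let X be a finite set of points in ℝ² with the L1 metric. If {p,q} is an increasing pair of points of X, {a,b} is a decreasing pair of points of X, and ⟨p,q⟩ = ⟨a,b⟩, then p, q, a, b are four distinct points that are the corners of an axis-parallel rectangle with {p,q} and {a,b} the two diagonal pairs; that is, {x(p),x(q)} = {x(a),x(b)} and {y(p),y(q)} = {y(a),y(b)}. -/
noncomputable section
open Classical

/-!
A point of an L1 line lies in the bounding box of the two points spanning it, or one of those two
lies in the bounding box of the other and the point. Hence if `p` is strictly south-west of `q`, the
line `pq` lies in the union of the boxes `Iic p`, `Icc p q` and `Ici q`, and a point of an earlier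
box is `≤` every point of a later one. A decreasing pair `{a, b}` is incomparable, so if it lies on
this line, both its points lie in the same box. In `Iic p` they would make `q` strictly north-east
of both, which no point of the line `ab` can be; `Ici q` is excluded in the same way by `p`. So `a`
and `b` lie in the bounding box of `p` and `q`, and reflecting the second coordinate gives the
converse: the two bounding boxes coincide.
-/

open Set OrderDual

/-- The reflection in the first axis, encoded by reversing the order of the second factor; it
exchanges increasing and decreasing pairs. -/
def reflect {α β : Type*} (u : α × β) : α × βᵒᵈ := (u.1, toDual u.2)

section Preorder

variable {α β : Type*} [Preorder α] [Preorder β] {u v : α × β}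

/-- An increasing pair in a product of two orders: one point is strictly south-west of the
other. Over `ℝ` this is `IncPair`. -/
def IsIncreasingPair (u v : α × β) : Prop :=
  (u.1 < v.1 ∧ u.2 < v.2) ∨ (v.1 < u.1 ∧ v.2 < u.2)

/-- A decreasing pair in a product of two orders: one point is strictly north-west of the
other. Over `ℝ` this is `DecPair`. -/
def IsDecreasingPair (u v : α × β) : Prop :=
  (u.1 < v.1 ∧ v.2 < u.2) ∨ (v.1 < u.1 ∧ u.2 < v.2)

theorem IsIncreasingPair.symm (h : IsIncreasingPair u v) : IsIncreasingPair v u := Or.symm h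

theorem IsDecreasingPair.symm (h : IsDecreasingPair u v) : IsDecreasingPair v u := Or.symm h

theorem IsIncreasingPair.ne (h : IsIncreasingPair u v) : u ≠ v := by
  rintro rfl
  exact h.elim (fun h => h.1.false) fun h => h.1.false

theorem IsDecreasingPair.not_le (h : IsDecreasingPair u v) : ¬ u ≤ v := fun huv =>
  h.elim (fun h => huv.2.not_gt h.2) fun h => huv.1.not_gt h.1

theorem IsDecreasingPair.ne (h : IsDecreasingPair u v) : u ≠ v := fun huv => h.not_le huv.le

theorem IsIncreasingPair.reflect (h : IsIncreasingPair u v) :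
    IsDecreasingPair (reflect u) (reflect v) := h

theorem IsDecreasingPair.reflect (h : IsDecreasingPair u v) :
    IsIncreasingPair (reflect u) (reflect v) := h

end Preorder

/-- The line spanned by `u` and `v` for betweenness in the sense of bounding boxes, which in `ℝ × ℝ`
is L1 betweenness. Betweenness is not strict here, so `u` and `v` lie on the line. -/
def boxLine {γ : Type*} [Lattice γ] (u v : γ) : Set γ :=
  {z | z ∈ uIcc u v ∨ u ∈ uIcc z v ∨ v ∈ uIcc u z}

theorem boxLine_comm {γ : Type*} [Lattice γ] (u v : γ) : boxLine u v = boxLine v u := by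
  ext z
  simp only [boxLine, mem_ofPred_eq]
  rw [uIcc_comm u v, uIcc_comm u z, uIcc_comm z v, or_comm (a := u ∈ uIcc v z)]

section Lattice

variable {α β : Type*} [Lattice α] [Lattice β] {u v z a b : α × β}

theorem mem_uIcc_prod :
    z ∈ uIcc u v ↔ z.1 ∈ uIcc u.1 v.1 ∧ z.2 ∈ uIcc u.2 v.2 := by
  rw [uIcc_prod_eq, mem_prod]

theorem reflect_mem_uIcc : reflect z ∈ uIcc (reflect u) (reflect v) ↔ z ∈ uIcc u v := by
  simp only [mem_uIcc_prod, reflect, uIcc_toDual, mem_preimage, ofDual_toDual]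

theorem reflect_mem_boxLine :
    reflect z ∈ boxLine (reflect u) (reflect v) ↔ z ∈ boxLine u v := by
  simp only [boxLine, mem_ofPred_eq, reflect_mem_uIcc]

theorem IsIncreasingPair.not_isDecreasingPair_of_mem_uIcc (h : IsIncreasingPair u v)
    (hz : z ∈ uIcc u v) : ¬ IsDecreasingPair u z := by
  intro huz
  obtain ⟨h₁, h₂⟩ | ⟨h₁, h₂⟩ := h
  · rw [uIcc_of_le (show u ≤ v from ⟨h₁.le, h₂.le⟩)] at hz
    exact huz.not_le hz.1
  · rw [uIcc_of_ge (show v ≤ u from ⟨h₁.le, h₂.le⟩)] at hz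
    exact huz.symm.not_le hz.2

theorem not_isDecreasingPair_of_mem_boxLine (hz : z ∈ boxLine a b) (hza : IsIncreasingPair z a)
    (hzb : IsIncreasingPair z b) : ¬ IsDecreasingPair a b := by
  intro hab
  obtain hz | ha | hb := hz
  · exact hab.reflect.not_isDecreasingPair_of_mem_uIcc (reflect_mem_uIcc.2 hz) hza.symm.reflect
  · exact hzb.symm.not_isDecreasingPair_of_mem_uIcc (uIcc_comm z b ▸ ha) hab.symm
  · exact hza.symm.not_isDecreasingPair_of_mem_uIcc hb hab

end Lattice

theorem ne_of_uIcc_eq_uIcc {α β : Type*} [DistribLattice α] [DistribLattice β] {p q a b : α × β}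
    (hpq : IsIncreasingPair p q) (hab : IsDecreasingPair a b)
    (h : uIcc p q = uIcc a b) : p ≠ a := by
  rintro rfl
  obtain rfl : q = b := uIcc_injective_left p h
  exact hpq.not_isDecreasingPair_of_mem_uIcc right_mem_uIcc hab

section LinearOrder

variable {α β : Type*} [LinearOrder α] [LinearOrder β] {u v z p q a b : α × β}

theorem le_of_mem_uIcc_of_lt (h₁ : u.1 < v.1) (h₂ : u.2 < v.2) (h : u ∈ uIcc z v) :
    z ≤ u :=
  ⟨(inf_le_iff.1 h.1.1).resolve_right h₁.not_ge, (inf_le_iff.1 h.1.2).resolve_right h₂.not_ge⟩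

theorem ge_of_mem_uIcc_of_lt (h₁ : u.1 < v.1) (h₂ : u.2 < v.2) (h : v ∈ uIcc u z) :
    v ≤ z :=
  ⟨(le_sup_iff.1 h.2.1).resolve_left h₁.not_ge, (le_sup_iff.1 h.2.2).resolve_left h₂.not_ge⟩

theorem boxLine_subset_of_lt (h₁ : u.1 < v.1) (h₂ : u.2 < v.2) :
    boxLine u v ⊆ Iic u ∪ Icc u v ∪ Ici v := by
  rintro z (hz | hz | hz)
  · rw [uIcc_of_le (show u ≤ v from ⟨h₁.le, h₂.le⟩)] at hz
    exact .inl (.inr hz)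
  · exact .inl (.inl (le_of_mem_uIcc_of_lt h₁ h₂ hz))
  · exact .inr (ge_of_mem_uIcc_of_lt h₁ h₂ hz)

theorem mem_uIcc_of_mem_boxLine (hpq : IsIncreasingPair p q) (hab : IsDecreasingPair a b)
    (ha : a ∈ boxLine p q) (hb : b ∈ boxLine p q) (hp : p ∈ boxLine a b) (hq : q ∈ boxLine a b) :
    a ∈ uIcc p q ∧ b ∈ uIcc p q := by
  wlog h : p.1 < q.1 ∧ p.2 < q.2 generalizing p q
  · rw [uIcc_comm]
    rw [boxLine_comm] at ha hb
    exact this hpq.symm ha hb hq hp (hpq.resolve_left h)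
  obtain ⟨h₁, h₂⟩ := h
  have hle : p ≤ q := ⟨h₁.le, h₂.le⟩
  have not_below : ¬ (a ≤ p ∧ b ≤ p) := fun ⟨hap, hbp⟩ =>
    not_isDecreasingPair_of_mem_boxLine hq
      (.inr ⟨hap.1.trans_lt h₁, hap.2.trans_lt h₂⟩)
      (.inr ⟨hbp.1.trans_lt h₁, hbp.2.trans_lt h₂⟩) hab
  have not_above : ¬ (q ≤ a ∧ q ≤ b) := fun ⟨hqa, hqb⟩ =>
    not_isDecreasingPair_of_mem_boxLine hp
      (.inl ⟨h₁.trans_le hqa.1, h₂.trans_le hqa.2⟩)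
      (.inl ⟨h₁.trans_le hqb.1, h₂.trans_le hqb.2⟩) hab
  have hnab : ¬ a ≤ b := hab.not_le
  have hnba : ¬ b ≤ a := hab.symm.not_le
  rw [uIcc_of_le hle]
  obtain (hap | ha) | hqa := boxLine_subset_of_lt h₁ h₂ ha <;>
    obtain (hbp | hb) | hqb := boxLine_subset_of_lt h₁ h₂ hb
  · exact absurd ⟨hap, hbp⟩ not_below
  · exact absurd (le_trans hap hb.1) hnab
  · exact absurd (le_trans hap (hle.trans hqb)) hnab
  · exact absurd (le_trans hbp ha.1) hnba
  · exact ⟨ha, hb⟩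
  · exact absurd (ha.2.trans hqb) hnab
  · exact absurd (le_trans hbp (hle.trans hqa)) hnba
  · exact absurd (hb.2.trans hqa) hnba
  · exact absurd ⟨hqa, hqb⟩ not_above

theorem uIcc_eq_uIcc_of_mem_boxLine (hpq : IsIncreasingPair p q) (hab : IsDecreasingPair a b)
    (ha : a ∈ boxLine p q) (hb : b ∈ boxLine p q) (hp : p ∈ boxLine a b) (hq : q ∈ boxLine a b) :
    uIcc p q = uIcc a b := by
  obtain ⟨ha', hb'⟩ := mem_uIcc_of_mem_boxLine hpq hab ha hb hp hq
  obtain ⟨hp', hq'⟩ := mem_uIcc_of_mem_boxLine hab.reflect hpq.reflect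
    (reflect_mem_boxLine.2 hp) (reflect_mem_boxLine.2 hq)
    (reflect_mem_boxLine.2 ha) (reflect_mem_boxLine.2 hb)
  exact (uIcc_subset_uIcc (reflect_mem_uIcc.1 hp') (reflect_mem_uIcc.1 hq')).antisymm
    (uIcc_subset_uIcc ha' hb')

theorem pair_eq_pair_of_uIcc_eq_uIcc {r s t w : α} (h : uIcc r s = uIcc t w) :
    ({r, s} : Set α) = {t, w} := by
  have hinf_sup := (Icc_eq_Icc_iff inf_le_sup).1 h
  rw [pair_eq_pair_iff, ← Sym2.eq_iff]
  exact Sym2.inf_eq_inf_and_sup_eq_sup.1 hinf_sup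

theorem inc_dec_same_line_rectangle_general (hpq : IsIncreasingPair p q)
    (hab : IsDecreasingPair a b) (ha : a ∈ boxLine p q) (hb : b ∈ boxLine p q)
    (hp : p ∈ boxLine a b) (hq : q ∈ boxLine a b) :
    p ≠ q ∧ p ≠ a ∧ p ≠ b ∧ q ≠ a ∧ q ≠ b ∧ a ≠ b ∧
    ({p.1, q.1} : Set α) = {a.1, b.1} ∧ ({p.2, q.2} : Set β) = {a.2, b.2} := by
  have hbox : uIcc p q = uIcc a b := uIcc_eq_uIcc_of_mem_boxLine hpq hab ha hb hp hq
  have hsides : uIcc p.1 q.1 = uIcc a.1 b.1 ∧ uIcc p.2 q.2 = uIcc a.2 b.2 := by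
    rwa [uIcc_prod_eq p, uIcc_prod_eq a,
      prod_eq_prod_iff_of_nonempty (nonempty_uIcc.prod nonempty_uIcc)] at hbox
  exact ⟨hpq.ne, ne_of_uIcc_eq_uIcc hpq hab hbox,
    ne_of_uIcc_eq_uIcc hpq hab.symm (hbox.trans (uIcc_comm a b)),
    ne_of_uIcc_eq_uIcc hpq.symm hab ((uIcc_comm q p).trans hbox),
    ne_of_uIcc_eq_uIcc hpq.symm hab.symm ((uIcc_comm q p).trans (hbox.trans (uIcc_comm a b))),
    hab.ne, pair_eq_pair_of_uIcc_eq_uIcc hsides.1, pair_eq_pair_of_uIcc_eq_uIcc hsides.2⟩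

end LinearOrder

theorem abs_sub_eq_abs_sub_add_abs_sub_iff {G : Type*} [AddCommGroup G] [LinearOrder G]
    [IsOrderedAddMonoid G] {r s t : G} : |r - t| = |r - s| + |s - t| ↔ s ∈ uIcc r t := by
  rw [← sub_add_sub_cancel r s t, abs_add_eq_add_abs_iff, mem_uIcc]
  simp only [sub_nonneg, sub_nonpos]
  tauto

theorem rho_eq_rho_add_rho_iff {u z v : ℝ × ℝ} : rho u v = rho u z + rho z v ↔ z ∈ uIcc u v := by
  rw [mem_uIcc_prod, ← abs_sub_eq_abs_sub_add_abs_sub_iff, ← abs_sub_eq_abs_sub_add_abs_sub_iff,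
    ← add_eq_add_iff_eq_and_eq (abs_sub_le u.1 z.1 v.1) (abs_sub_le u.2 z.2 v.2), rho, rho, rho,
    add_add_add_comm]

theorem IncPair.isIncreasingPair {p q : ℝ × ℝ} (h : IncPair p q) : IsIncreasingPair p q := by
  simpa only [IncPair, IsIncreasingPair, mul_pos_iff, sub_pos, sub_neg] using h

theorem DecPair.isDecreasingPair {p q : ℝ × ℝ} (h : DecPair p q) : IsDecreasingPair p q := by
  simpa only [DecPair, IsDecreasingPair, mul_neg_iff, sub_pos, sub_neg] using h

section LineThrough

variable {X : Finset (ℝ × ℝ)} {u v z : ℝ × ℝ}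

theorem left_mem_lineThrough (hu : u ∈ X) : u ∈ lineThrough X u v :=
  Finset.mem_filter.2 ⟨hu, .inl rfl⟩

theorem right_mem_lineThrough (hv : v ∈ X) : v ∈ lineThrough X u v :=
  Finset.mem_filter.2 ⟨hv, .inr (.inl rfl)⟩

theorem mem_boxLine_of_mem_lineThrough (hz : z ∈ lineThrough X u v) : z ∈ boxLine u v := by
  obtain rfl | rfl | h | h | h := (Finset.mem_filter.1 hz).2
  · exact .inl left_mem_uIcc
  · exact .inl right_mem_uIcc
  · exact .inl (rho_eq_rho_add_rho_iff.1 h.2.2.2)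
  · exact .inr (.inl (rho_eq_rho_add_rho_iff.1 h.2.2.2))
  · exact .inr (.inr (rho_eq_rho_add_rho_iff.1 h.2.2.2))

end LineThrough

/-- If an increasing pair and a decreasing pair of points of `X` induce the
same line, then the four points are distinct and are the corners of an
axis-parallel rectangle, the two pairs being its diagonals. -/
theorem inc_dec_same_line_rectangle (X : Finset (ℝ × ℝ)) (p q a b : ℝ × ℝ)
    (hp : p ∈ X) (hq : q ∈ X) (ha : a ∈ X) (hb : b ∈ X)
    (hpq : IncPair p q) (hab : DecPair a b)
    (hline : lineThrough X p q = lineThrough X a b) :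
    p ≠ q ∧ p ≠ a ∧ p ≠ b ∧ q ≠ a ∧ q ≠ b ∧ a ≠ b ∧
    ({p.1, q.1} : Set ℝ) = {a.1, b.1} ∧ ({p.2, q.2} : Set ℝ) = {a.2, b.2} :=
  inc_dec_same_line_rectangle_general hpq.isIncreasingPair hab.isDecreasingPair
    (mem_boxLine_of_mem_lineThrough (hline ▸ left_mem_lineThrough ha))
    (mem_boxLine_of_mem_lineThrough (hline ▸ right_mem_lineThrough hb))
    (mem_boxLine_of_mem_lineThrough (hline ▸ left_mem_lineThrough hp))
    (mem_boxLine_of_mem_lineThrough (hline ▸ right_mem_lineThrough hq))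
end
end

section
/- Let X be a finite set of points in ℝ² with the L1 metric, and let a, b ∈ X be distinct points such that for each of a and b its first, second and fourth quadrants are all empty. Then {a,b} is a horizontal or vertical pair, and the line ⟨a,b⟩ equals X. -/
noncomputable section
open Classical

/-
Call a point dominant if its first, second and fourth quadrants are empty. A point of `X` strictly
above a dominant point lies on the vertical line through it, and a point of `X` strictly below it
does not lie to its right. So, by comparing heights, two dominant points of `X` span a horizontal or
vertical pair; say horizontal. No point of `X` is strictly above the pair, as such a point would lie
on two distinct vertical lines. Any point of `X` strictly below the pair lies weakly to the left of
both, so the left one of the pair is in the box spanned by that point and the right one. Finally, a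
point in the box spanned by two others is between them in the L1 metric.
-/

theorem mem_uIcc_or_mem_uIcc_or_mem_uIcc {α : Type*} [LinearOrder α] (p q r : α) :
    r ∈ Set.uIcc p q ∨ p ∈ Set.uIcc r q ∨ q ∈ Set.uIcc p r := by
  simp only [Set.mem_uIcc]
  grind

/-- One of the three points lies in the axis-parallel box spanned by the other two, which is
`Set.uIcc` in the product order. For distinct points of the plane this implies collinearity in the
L1 metric. -/
def BoxCollinear {α β : Type*} [Lattice α] [Lattice β] (a b z : α × β) : Prop :=
  z ∈ Set.uIcc a b ∨ a ∈ Set.uIcc z b ∨ b ∈ Set.uIcc a z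

/-- `a` is dominant for `X`: its first, second and fourth quadrants contain no point of `X`. The
point `a` itself need not belong to `X`. -/
structure IsDominant {α β : Type*} [LT α] [LT β] (X : Set (α × β)) (a : α × β) : Prop where
  firstQuadrant : ∀ z ∈ X, ¬(a.1 < z.1 ∧ a.2 < z.2)
  secondQuadrant : ∀ z ∈ X, ¬(z.1 < a.1 ∧ a.2 < z.2)
  fourthQuadrant : ∀ z ∈ X, ¬(a.1 < z.1 ∧ z.2 < a.2)

section Order

variable {α β : Type*} {X : Set (α × β)} {a b z : α × β}

namespace BoxCollinear

theorem swap_iff [Lattice α] [Lattice β] :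
    BoxCollinear a.swap b.swap z.swap ↔ BoxCollinear a b z := by
  simp only [BoxCollinear, Set.uIcc_prod_eq, Set.mem_prod, Prod.fst_swap, Prod.snd_swap, and_comm]

theorem of_snd_eq [LinearOrder α] [Lattice β] (hab : a.2 = b.2) (hza : z.2 = a.2) :
    BoxCollinear a b z := by
  simpa only [BoxCollinear, Set.uIcc_prod_eq, Set.mem_prod, ← hab, hza, Set.left_mem_uIcc,
    and_true] using mem_uIcc_or_mem_uIcc_or_mem_uIcc a.1 b.1 z.1

theorem of_le_of_le [LinearOrder α] [Lattice β] (hab : a.2 = b.2) (hza : z ≤ a) (hzb : z ≤ b) :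
    BoxCollinear a b z := by
  rcases le_total a.1 b.1 with h | h
  · exact .inr (.inl (Set.mem_uIcc_of_le hza ⟨h, hab.le⟩))
  · exact .inr (.inr (Set.mem_uIcc_of_ge hzb ⟨h, hab.ge⟩))

end BoxCollinear

namespace IsDominant

theorem swap [LT α] [LT β] (ha : IsDominant X a) : IsDominant (Prod.swap ⁻¹' X) a.swap where
  firstQuadrant _ hz h := ha.firstQuadrant _ hz h.symm
  secondQuadrant _ hz h := ha.fourthQuadrant _ hz h.symm
  fourthQuadrant _ hz h := ha.secondQuadrant _ hz h.symm

theorem fst_eq_of_snd_lt [LinearOrder α] [LT β] (ha : IsDominant X a) (hz : z ∈ X)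
    (h : a.2 < z.2) : z.1 = a.1 :=
  le_antisymm (not_lt.mp fun hlt => ha.firstQuadrant z hz ⟨hlt, h⟩)
    (not_lt.mp fun hlt => ha.secondQuadrant z hz ⟨hlt, h⟩)

theorem le_of_snd_lt [LinearOrder α] [Preorder β] (ha : IsDominant X a) (hz : z ∈ X)
    (h : z.2 < a.2) : z ≤ a :=
  ⟨not_lt.mp fun hlt => ha.fourthQuadrant z hz ⟨hlt, h⟩, h.le⟩

variable [LinearOrder α] [LinearOrder β]

theorem snd_eq_or_fst_eq (ha : IsDominant X a) (hb : IsDominant X b) (haX : a ∈ X) (hbX : b ∈ X) :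
    a.2 = b.2 ∨ a.1 = b.1 := by
  rcases lt_trichotomy a.2 b.2 with h | h | h
  · exact .inr (ha.fst_eq_of_snd_lt hbX h).symm
  · exact .inl h
  · exact .inr (hb.fst_eq_of_snd_lt haX h)

theorem boxCollinear_of_snd_eq (ha : IsDominant X a) (hb : IsDominant X b) (hab : a ≠ b)
    (h : a.2 = b.2) (hz : z ∈ X) : BoxCollinear a b z := by
  rcases lt_trichotomy z.2 a.2 with hlt | heq | hgt
  · exact .of_le_of_le h (ha.le_of_snd_lt hz hlt) (hb.le_of_snd_lt hz (h ▸ hlt))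
  · exact .of_snd_eq h heq
  · have hza : z.1 = a.1 := ha.fst_eq_of_snd_lt hz hgt
    have hzb : z.1 = b.1 := hb.fst_eq_of_snd_lt hz (h ▸ hgt)
    exact absurd (Prod.ext (hza.symm.trans hzb) h) hab

theorem boxCollinear (ha : IsDominant X a) (hb : IsDominant X b) (haX : a ∈ X) (hbX : b ∈ X)
    (hab : a ≠ b) (hz : z ∈ X) : BoxCollinear a b z := by
  rcases ha.snd_eq_or_fst_eq hb haX hbX with h | h
  · exact ha.boxCollinear_of_snd_eq hb hab h hz
  · have hz' : z.swap ∈ Prod.swap ⁻¹' X := by rwa [Set.mem_preimage, Prod.swap_swap]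
    exact BoxCollinear.swap_iff.mp
      (ha.swap.boxCollinear_of_snd_eq hb.swap (Prod.swap_injective.ne hab) h hz')

end IsDominant

end Order

section Manhattan

variable {u v z : ℝ × ℝ}

/-- `z` lies on the line `⟨u,v⟩` of any set containing `z`: the membership condition of
`lineThrough`, freed from the finite ambient set. -/
def OnLine (u v z : ℝ × ℝ) : Prop :=
  z = u ∨ z = v ∨ MBtw u z v ∨ MBtw z u v ∨ MBtw u v z

theorem rho_eq_add_of_mem_uIcc (h : z ∈ Set.uIcc u v) : rho u v = rho u z + rho z v := by
  rw [Set.uIcc_prod_eq, ← segment_eq_uIcc, ← segment_eq_uIcc] at h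
  have hfst : |u.1 - z.1| + |z.1 - v.1| = |u.1 - v.1| := dist_add_dist_of_mem_segment h.1
  have hsnd : |u.2 - z.2| + |z.2 - v.2| = |u.2 - v.2| := dist_add_dist_of_mem_segment h.2
  simp only [rho, ← hfst, ← hsnd]
  ring

theorem BoxCollinear.onLine (h : BoxCollinear u v z) (huv : u ≠ v) : OnLine u v z := by
  by_cases hzu : z = u
  · exact .inl hzu
  by_cases hzv : z = v
  · exact .inr (.inl hzv)
  refine .inr (.inr ?_)
  rcases h with h | h | h
  · exact .inl ⟨Ne.symm hzu, hzv, huv, rho_eq_add_of_mem_uIcc h⟩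
  · exact .inr (.inl ⟨hzu, huv, hzv, rho_eq_add_of_mem_uIcc h⟩)
  · exact .inr (.inr ⟨huv, Ne.symm hzv, Ne.symm hzu, rho_eq_add_of_mem_uIcc h⟩)

end Manhattan

theorem two_dominant_points_universal_line_general {X : Set (ℝ × ℝ)} {a b : ℝ × ℝ}
    (haX : a ∈ X) (hbX : b ∈ X) (hab : a ≠ b) (ha : IsDominant X a) (hb : IsDominant X b) :
    (a.2 = b.2 ∨ a.1 = b.1) ∧ ∀ z ∈ X, OnLine a b z :=
  ⟨ha.snd_eq_or_fst_eq hb haX hbX, fun _ hz => (ha.boxCollinear hb haX hbX hab hz).onLine hab⟩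

/-- If `a, b ∈ X` are distinct points such that for each of them the first,
second and fourth quadrants are all empty, then `{a,b}` is a horizontal or
vertical pair and the line `⟨a,b⟩` is universal. -/
theorem two_dominant_points_universal_line (X : Finset (ℝ × ℝ)) (a b : ℝ × ℝ)
    (haX : a ∈ X) (hbX : b ∈ X) (hab : a ≠ b)
    (haQ1 : ∀ z ∈ X, ¬(a.1 < z.1 ∧ a.2 < z.2))
    (haQ2 : ∀ z ∈ X, ¬(z.1 < a.1 ∧ a.2 < z.2))
    (haQ4 : ∀ z ∈ X, ¬(a.1 < z.1 ∧ z.2 < a.2))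
    (hbQ1 : ∀ z ∈ X, ¬(b.1 < z.1 ∧ b.2 < z.2))
    (hbQ2 : ∀ z ∈ X, ¬(z.1 < b.1 ∧ b.2 < z.2))
    (hbQ4 : ∀ z ∈ X, ¬(b.1 < z.1 ∧ z.2 < b.2)) :
    (a.2 = b.2 ∨ a.1 = b.1) ∧ lineThrough X a b = X :=
  (two_dominant_points_universal_line_general (X := X) haX hbX hab
    ⟨haQ1, haQ2, haQ4⟩ ⟨hbQ1, hbQ2, hbQ4⟩).imp_right Finset.filter_eq_self.mpr
end
end
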